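/- arXiv:2103.14726 — 2 statements merged into one kernel-verified Lean document; each statement's English description precedes it below -/
import Mathlib

section
/- Let [n] be partitioned into clusters C_1,…,C_k with |C_r| = n_r ≥ 2, and let M = Qᵀ A(L(K_n)) Q where Q is the associated block-indicator matrix. Then rank(M + 2·I_{C(k+1,2)}) = k; equivalently, the nullity of M + 2I equals C(k+1,2) − k = C(k,2). -/
open scoped Classical
open Matrix

noncomputable section

/-- The edges of the complete graph `K_n`: unordered pairs of distinct elements of `Fin n`. -/
def CompleteEdge (n : ℕ) : Type := {e : Sym2 (Fin n) // ¬ e.IsDiag}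

instance (n : ℕ) : Fintype (CompleteEdge n) := Subtype.fintype _
instance (n : ℕ) : DecidableEq (CompleteEdge n) := Subtype.instDecidableEq

/-- The adjacency matrix of the line graph of the complete graph `K_n`: rows and columns are
indexed by the edges of `K_n`, with entry `1` exactly when the two edges are distinct and share
an endpoint. -/
def ALK (n : ℕ) : Matrix (CompleteEdge n) (CompleteEdge n) ℝ :=
  fun e f => if e ≠ f ∧ ∃ v, v ∈ e.1 ∧ v ∈ f.1 then 1 else 0

variable {n k : ℕ}

/-- The block of the induced edge partition to which an edge belongs: the unordered pair of
clusters of its two endpoints. Blocks are indexed by `Sym2 (Fin k)`, which has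
cardinality `C(k+1,2)`. -/
def blkOf (c : Fin n → Fin k) (e : CompleteEdge n) : Sym2 (Fin k) := Sym2.map c e.1

/-- The size `m_{r,s}` of a block of the induced edge partition. -/
def blkSize (c : Fin n → Fin k) (b : Sym2 (Fin k)) : ℕ :=
  (Finset.univ.filter (fun e : CompleteEdge n => blkOf c e = b)).card

/-- The block-indicator matrix `Q` of the induced edge partition:
`Q_{e,(r,s)} = m_{r,s}^{-1/2}` if `e ∈ C_{(r,s)}` and `0` otherwise. -/
def Qmat (c : Fin n → Fin k) : Matrix (CompleteEdge n) (Sym2 (Fin k)) ℝ :=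
  fun e b => if blkOf c e = b then 1 / Real.sqrt (blkSize c b) else 0

/-- `M = Qᵀ A(L(K_n)) Q`. -/
def Mmat (c : Fin n → Fin k) : Matrix (Sym2 (Fin k)) (Sym2 (Fin k)) ℝ :=
  (Qmat c)ᵀ * ALK n * Qmat c

/-- The size of the cluster `C_r`. -/
def clusterSize (c : Fin n → Fin k) (r : Fin k) : ℕ :=
  (Finset.univ.filter (fun i => c i = r)).card

/-!
If `B` is the vertex-edge incidence matrix of `K_n`, then `BᵀB = A(L(K_n)) + 2I`. Since no block of
the edge partition is empty, `QᵀQ = I`, whence `M + 2I = (BQ)ᵀ(BQ)` has the rank of `BQ`. Up to the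
normalization of `Q`, the entry of `BQ` at a vertex `v` and a block counts the edges at `v` in that
block, so it depends only on the cluster of `v`: the rows of `BQ` are those of a matrix with `k`
rows, repeated. The columns of that matrix belonging to the blocks `(r, r)` form a diagonal matrix
with entries `(n_r - 1) / √m_{r,r} ≠ 0`, so its rank is `k`.
-/

section Rank

variable {R : Type*} {l m m' : Type*} [Fintype l]

theorem rank_submatrix_of_surjective [CommSemiring R] [StrongRankCondition R] (A : Matrix m l R)
    {f : m' → m} (hf : Function.Surjective f) : (A.submatrix f id).rank = A.rank := by
  refine (A.rank_submatrix_le f id).antisymm ?_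
  calc A.rank = ((A.submatrix f id).submatrix (Function.surjInv hf) id).rank := by
        simp [Matrix.submatrix_submatrix, Function.comp_surjInv]
    _ ≤ (A.submatrix f id).rank := rank_submatrix_le _ _ _

theorem rank_eq_card_of_submatrix_eq_diagonal [Field R] [Fintype m] [DecidableEq m]
    {A : Matrix m l R} {g : m → l} {d : m → R} (hA : A.submatrix id g = diagonal d)
    (hd : ∀ i, d i ≠ 0) : A.rank = Fintype.card m := by
  refine A.rank_le_card_height.antisymm ?_
  calc Fintype.card m = (diagonal d).rank := by simp [rank_diagonal, hd]
    _ = (A.submatrix id g).rank := by rw [hA]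
    _ ≤ A.rank := A.rank_submatrix_le id g

end Rank

section Incidence

variable {V R : Type*} [DecidableEq V] [NonAssocSemiring R]
variable (G : SimpleGraph V) [DecidableRel G.Adj]

variable (R) in
/-- The incidence matrix of `G` with columns indexed by the edges of `G` only (and not by all of
`Sym2 V` as in `SimpleGraph.incMatrix`), so that its Gram matrix is indexed like the adjacency
matrix of the line graph. -/
def edgeIncMatrix : Matrix V G.edgeSet R :=
  (G.incMatrix R).submatrix id (↑)

theorem edgeIncMatrix_apply (v : V) (e : G.edgeSet) :
    edgeIncMatrix R G v e = if v ∈ (e : Sym2 V) then 1 else 0 := by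
  simp [edgeIncMatrix, SimpleGraph.incMatrix_apply', SimpleGraph.incidenceSet]

variable [Fintype V]

theorem sum_ite_mem_and_mem_of_ne {e f : Sym2 V} (hef : e ≠ f) :
    (∑ v, if v ∈ e ∧ v ∈ f then (1 : R) else 0) = if ∃ v, v ∈ e ∧ v ∈ f then 1 else 0 := by
  split_ifs with h
  · obtain ⟨v, hve, hvf⟩ := h
    have unique : ∀ u, u ∈ e ∧ u ∈ f ↔ u = v := by
      refine fun u => ⟨fun ⟨hue, huf⟩ => ?_, by rintro rfl; exact ⟨hve, hvf⟩⟩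
      by_contra huv
      exact hef (((Sym2.mem_and_mem_iff huv).1 ⟨hue, hve⟩).trans
        ((Sym2.mem_and_mem_iff huv).1 ⟨huf, hvf⟩).symm)
    simp [unique]
  · push Not at h
    exact Finset.sum_eq_zero fun v _ => if_neg fun hv => h v hv.1 hv.2

theorem edgeIncMatrix_transpose_mul_self [DecidableRel G.lineGraph.Adj] :
    (edgeIncMatrix R G)ᵀ * edgeIncMatrix R G = G.lineGraph.adjMatrix R + (2 : R) • 1 := by
  ext e f
  rcases eq_or_ne e f with rfl | hef
  · simpa [edgeIncMatrix, Matrix.mul_apply] using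
      G.incMatrix_transpose_mul_diag (R := R) (e := (e : Sym2 V))
  · have hef' : (e : Sym2 V) ≠ f := Subtype.coe_ne_coe.2 hef
    simp [Matrix.mul_apply, edgeIncMatrix_apply, ← ite_and, SimpleGraph.lineGraph_adj_iff_exists,
      hef, and_comm, ← sum_ite_mem_and_mem_of_ne hef']

theorem sum_edgeIncMatrix_mul (v : V) (g : Sym2 V → R) :
    ∑ e, edgeIncMatrix R G v e * g e = ∑ w ∈ G.neighborFinset v, g s(v, w) := by
  let edgeTo (w : G.neighborSet v) : G.edgeSet := ⟨s(v, w), w.2⟩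
  have edgeTo_injective : Function.Injective edgeTo := fun w w' h =>
    Subtype.ext (Sym2.congr_right.1 (congrArg Subtype.val h))
  have eq_zero_of_notMem_range : ∀ e ∉ Set.range edgeTo, edgeIncMatrix R G v e * g e = 0 := by
    intro e he
    rw [edgeIncMatrix_apply, if_neg, zero_mul]
    rintro ⟨w, hw⟩
    exact he ⟨⟨w, by simpa [hw] using e.2⟩, Subtype.ext hw.symm⟩
  calc ∑ e, edgeIncMatrix R G v e * g e
      = ∑ w : G.neighborSet v, g s(v, w) :=
        (Fintype.sum_of_injective edgeTo edgeTo_injective _ _ eq_zero_of_notMem_range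
          fun w => by simp [edgeIncMatrix_apply, edgeTo]).symm
    _ = ∑ w ∈ G.neighborFinset v, g s(v, w) :=
        (Finset.sum_subtype (p := (· ∈ G.neighborSet v)) _ (by simp) fun w => g s(v, w)).symm

end Incidence

section CompleteGraph

/-- `CompleteEdge n` as the edge set of Mathlib's complete graph, through which facts about
incidence matrices of arbitrary graphs specialize to `K_n`. -/
def completeEdgeEquiv (n : ℕ) : CompleteEdge n ≃ (⊤ : SimpleGraph (Fin n)).edgeSet :=
  Equiv.subtypeEquivRight fun e => by simp

/-- The vertex-edge incidence matrix `B` of `K_n`, with columns indexed by `CompleteEdge n` as in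
`ALK` and `Qmat`. -/
def completeIncMatrix (n : ℕ) : Matrix (Fin n) (CompleteEdge n) ℝ :=
  (edgeIncMatrix ℝ ⊤).submatrix id (completeEdgeEquiv n)

theorem ALK_eq_adjMatrix_lineGraph (n : ℕ) :
    ALK n = ((⊤ : SimpleGraph (Fin n)).lineGraph.adjMatrix ℝ).submatrix
      (completeEdgeEquiv n) (completeEdgeEquiv n) := by
  ext e f
  simp only [ALK, submatrix_apply, SimpleGraph.adjMatrix_apply,
    SimpleGraph.lineGraph_adj_iff_exists, (completeEdgeEquiv n).injective.ne_iff]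
  rfl

theorem completeIncMatrix_transpose_mul_self (n : ℕ) :
    (completeIncMatrix n)ᵀ * completeIncMatrix n = ALK n + (2 : ℝ) • 1 := by
  rw [completeIncMatrix, transpose_submatrix, ← submatrix_mul _ _ _ _ _ Function.bijective_id,
    edgeIncMatrix_transpose_mul_self, ALK_eq_adjMatrix_lineGraph]
  simp [submatrix_add, submatrix_smul]

theorem sum_completeIncMatrix_mul (v : Fin n) (g : Sym2 (Fin n) → ℝ) :
    ∑ e, completeIncMatrix n v e * g e.1 = ∑ w with w ≠ v, g s(v, w) := by
  calc
    _ = ∑ e, edgeIncMatrix ℝ ⊤ v e * g e :=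
      Equiv.sum_comp (completeEdgeEquiv n) fun e => edgeIncMatrix ℝ ⊤ v e * g e
    _ = _ := by
      rw [sum_edgeIncMatrix_mul]
      exact Finset.sum_congr (by ext w; simp [ne_comm]) fun _ _ => rfl

end CompleteGraph

section Clusters

variable {c : Fin n → Fin k}

theorem surjective_of_clusterSize_pos (hsz : ∀ r, 0 < clusterSize c r) :
    Function.Surjective c := by
  intro r
  obtain ⟨i, hi⟩ := Finset.card_pos.1 (hsz r)
  exact ⟨i, (Finset.mem_filter_univ i).1 hi⟩

theorem blkOf_surjective (hsz : ∀ r, 2 ≤ clusterSize c r) :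
    Function.Surjective (blkOf c) := by
  intro b
  induction b with | _ r s
  suffices ∃ i j, i ≠ j ∧ c i = r ∧ c j = s by
    obtain ⟨i, j, hij, rfl, rfl⟩ := this
    exact ⟨⟨s(i, j), by simpa using hij⟩, rfl⟩
  obtain ⟨i, hi⟩ := surjective_of_clusterSize_pos (fun r => two_pos.trans_le (hsz r)) r
  obtain ⟨j, hj, hji⟩ := Finset.exists_mem_ne (hsz s) i
  exact ⟨i, j, hji.symm, hi, (Finset.mem_filter_univ j).1 hj⟩

theorem blkSize_pos (hc : Function.Surjective (blkOf c)) (b : Sym2 (Fin k)) :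
    0 < blkSize c b := by
  obtain ⟨e, he⟩ := hc b
  exact Finset.card_pos.2 ⟨e, (Finset.mem_filter_univ e).2 he⟩

theorem Qmat_transpose_mul_self (hc : Function.Surjective (blkOf c)) :
    (Qmat c)ᵀ * Qmat c = 1 := by
  ext b b'
  rcases eq_or_ne b b' with rfl | hb
  · have hb : (0 : ℝ) < blkSize c b := Nat.cast_pos.2 (blkSize_pos hc b)
    calc ((Qmat c)ᵀ * Qmat c) b b
        = blkSize c b * (1 / √(blkSize c b) * (1 / √(blkSize c b))) := by
          simp [Matrix.mul_apply, Qmat, blkSize, ← ite_and, ← Finset.sum_filter]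
      _ = (1 : Matrix _ _ ℝ) b b := by
          simp [← mul_inv, Real.mul_self_sqrt hb.le, hb.ne']
  · have disjoint_blocks : ∀ e, Qmat c e b * Qmat c e b' = 0 := by
      intro e
      rcases eq_or_ne (blkOf c e) b with rfl | h
      · simp [Qmat, hb]
      · simp [Qmat, h]
    simp [Matrix.mul_apply, disjoint_blocks, hb]

theorem Mmat_add_two_eq_gram (hc : Function.Surjective (blkOf c)) :
    Mmat c + (2 : ℝ) • 1 = (completeIncMatrix n * Qmat c)ᵀ * (completeIncMatrix n * Qmat c) := by
  calc Mmat c + (2 : ℝ) • 1 = (Qmat c)ᵀ * (ALK n + (2 : ℝ) • 1) * Qmat c := by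
        simp [Mmat, Matrix.mul_add, Matrix.add_mul, Qmat_transpose_mul_self hc]
    _ = _ := by
        rw [← completeIncMatrix_transpose_mul_self, transpose_mul]
        simp only [Matrix.mul_assoc]

variable (c) in
/-- The quotient of the incidence matrix of `K_n` by the partition: the entry at `(r, b)` is the
number of edges in block `b` at a vertex of cluster `r`, normalized like `Qmat`. That vertex itself
lies in cluster `r`, hence the correction in the block `s(r, r)`. -/
def quotientIncMatrix : Matrix (Fin k) (Sym2 (Fin k)) ℝ :=
  fun r b => ((Finset.univ.filter fun w => s(r, c w) = b).card - if s(r, r) = b then 1 else 0) /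
    √(blkSize c b)

variable (c) in
theorem completeIncMatrix_mul_Qmat :
    completeIncMatrix n * Qmat c = (quotientIncMatrix c).submatrix c id := by
  ext v b
  calc (completeIncMatrix n * Qmat c) v b
      = ∑ w with w ≠ v, if s(c v, c w) = b then 1 / √(blkSize c b) else 0 :=
        sum_completeIncMatrix_mul v fun e => if e.map c = b then 1 / √(blkSize c b) else 0
    _ = (∑ w, if s(c v, c w) = b then 1 / √(blkSize c b) else 0) -
          if s(c v, c v) = b then 1 / √(blkSize c b) else 0 := by
        rw [Finset.filter_ne', Finset.sum_erase_eq_sub (Finset.mem_univ v)]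
    _ = quotientIncMatrix c (c v) b := by
        simp only [← Finset.sum_filter, Finset.sum_const, quotientIncMatrix]
        split_ifs <;> simp [sub_mul, div_eq_mul_inv]

variable (c) in
theorem quotientIncMatrix_submatrix_diag :
    (quotientIncMatrix c).submatrix id Sym2.diag =
      diagonal fun r => (clusterSize c r - 1 : ℝ) / √(blkSize c s(r, r)) := by
  ext r t
  rcases eq_or_ne r t with rfl | hrt
  · simp [quotientIncMatrix, clusterSize, Sym2.diag]
  · simp [quotientIncMatrix, Sym2.diag, hrt]

theorem rank_quotientIncMatrix (hsz : ∀ r, 2 ≤ clusterSize c r) :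
    (quotientIncMatrix c).rank = k := by
  rw [rank_eq_card_of_submatrix_eq_diagonal (quotientIncMatrix_submatrix_diag c) fun r => ?_,
    Fintype.card_fin]
  have hr : (1 : ℝ) < clusterSize c r := Nat.one_lt_cast.2 (hsz r)
  have hb : (0 : ℝ) < blkSize c s(r, r) := Nat.cast_pos.2 (blkSize_pos (blkOf_surjective hsz) _)
  exact (div_pos (sub_pos.2 hr) (Real.sqrt_pos.2 hb)).ne'

end Clusters

/-- For a partition of `[n]` into clusters each of size at least `2`, the
matrix `M + 2I` (with `M = Qᵀ A(L(K_n)) Q` of order `C(k+1,2)`) has rank `k`; equivalently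
its nullity is `C(k+1,2) − k = C(k,2)`. -/
theorem Mmat_add_two_rank {n k : ℕ} (c : Fin n → Fin k)
    (hsz : ∀ r, 2 ≤ clusterSize c r) :
    (Mmat c + (2 : ℝ) • (1 : Matrix (Sym2 (Fin k)) (Sym2 (Fin k)) ℝ)).rank = k := by
  have hc : Function.Surjective c :=
    surjective_of_clusterSize_pos fun r => two_pos.trans_le (hsz r)
  rw [Mmat_add_two_eq_gram (blkOf_surjective hsz), rank_transpose_mul_self,
    completeIncMatrix_mul_Qmat, rank_submatrix_of_surjective _ hc, rank_quotientIncMatrix hsz]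
end
end

section
/- Let [n] be partitioned into clusters C_1,…,C_k with |C_r| = n_r ≥ 2, with membership matrix Z ∈ M_{n,k}({0,1}), let B ∈ M_k([0,1]) be symmetric, 𝒫 = Z B Zᵀ, and let R be the C(n,2)×C(n,2) diagonal matrix with R_{{i,j},{i,j}} = 𝒫_{i,j}. Let Q be the block-indicator matrix of the induced edge partition and M = Qᵀ A(L(K_n)) Q. Then R Q = Q · diag([B_{r,s}]_{1≤r≤s≤k}) (the diagonal matrix of order C(k+1,2) whose ((r,s),(r,s)) entry is B_{r,s}), the range of Q is an invariant subspace of R·A(L(K_n))·R, and Qᵀ (R·A(L(K_n))·R) Q = diag([B_{r,s}]) · M · diag([B_{r,s}]). -/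
open scoped Classical
open Matrix

noncomputable section

variable {n k : ℕ}

/-- The value of a symmetric `k × k` matrix `B` on an unordered pair of indices
(for symmetric `B` this sends `s(r,s)` to `B r s`). -/
def symVal {k : ℕ} (B : Matrix (Fin k) (Fin k) ℝ) : Sym2 (Fin k) → ℝ :=
  Sym2.lift ⟨fun r s => (B r s + B s r) / 2, fun r s => by ring⟩

/-- The diagonal matrix `R` of order `C(n,2)` whose entry at the edge `{i,j}` is
`𝒫_{i,j} = B_{c(i), c(j)}` (the entry of `𝒫 = Z B Zᵀ`). -/
def Rmat {n k : ℕ} (c : Fin n → Fin k) (B : Matrix (Fin k) (Fin k) ℝ) :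
    Matrix (CompleteEdge n) (CompleteEdge n) ℝ :=
  Matrix.diagonal (fun e => symVal B (blkOf c e))

/-!
Writing `p` for the map sending an edge to its block, `Q` is a diagonal matrix pulled back along
`p` in its rows, and `R` is the diagonal matrix of a function of `p`; hence `R Q = Q D`, where `D`
is the diagonal matrix of that function. Vertex permutations preserving the clusters act
transitively on the edges of each block and leave both `A(L(K_n))` and `Q` unchanged, so the rows
of `A(L(K_n)) Q` are constant on blocks. As every nonempty block has nonzero weight in `Q`, this
gives `A(L(K_n)) Q = Q N` for some `N`, and therefore `R A(L(K_n)) R Q = Q (D N D)`.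
-/

section Intertwining

variable {ι κ S : Type*} [Fintype ι] [Fintype κ] {R A : Matrix ι ι S}
  {D : Matrix κ κ S} {Q : Matrix ι κ S}

lemma mul_mul_mul_eq_of_intertwine [NonUnitalSemiring S] {N : Matrix κ κ S}
    (hR : R * Q = Q * D) (hA : A * Q = Q * N) : R * A * R * Q = Q * (D * N * D) :=
  calc R * A * R * Q
      = R * (A * (R * Q)) := by simp only [Matrix.mul_assoc]
    _ = R * (A * Q * D) := by rw [hR, Matrix.mul_assoc]
    _ = R * Q * (N * D) := by simp only [hA, Matrix.mul_assoc]
    _ = Q * (D * N * D) := by simp only [hR, Matrix.mul_assoc]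

lemma transpose_mul_mul_eq_of_intertwine [NonUnitalCommSemiring S]
    (hRsymm : R.IsSymm) (hDsymm : D.IsSymm) (hR : R * Q = Q * D) :
    Qᵀ * (R * A * R) * Q = D * (Qᵀ * A * Q) * D := by
  have hRt : Qᵀ * R = D * Qᵀ := by
    simpa only [transpose_mul, hRsymm.eq, hDsymm.eq] using congrArg transpose hR
  calc Qᵀ * (R * A * R) * Q
      = Qᵀ * R * A * (R * Q) := by simp only [Matrix.mul_assoc]
    _ = D * (Qᵀ * A * Q) * D := by rw [hRt, hR]; simp only [Matrix.mul_assoc]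

end Intertwining

section BlockMatrix

variable {ι κ μ S : Type*}

lemma diagonal_comp_mul_submatrix_diagonal [Fintype ι] [DecidableEq ι] [Fintype κ] [DecidableEq κ]
    [NonUnitalCommSemiring S] (p : ι → κ) (v w : κ → S) :
    diagonal (w ∘ p) * (diagonal v).submatrix p id
      = (diagonal v).submatrix p id * diagonal w := by
  ext i b
  rw [diagonal_mul, mul_diagonal, submatrix_apply, id, Function.comp_apply]
  obtain rfl | hb := eq_or_ne (p i) b
  · exact mul_comm _ _
  · rw [diagonal_apply_ne _ hb, mul_zero, zero_mul]

lemma exists_eq_submatrix_diagonal_mul [Fintype κ] [DecidableEq κ] [DivisionSemiring S]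
    {p : ι → κ} {v : κ → S} (hv : ∀ i, v (p i) ≠ 0) {M : Matrix ι μ S}
    (hM : Function.FactorsThrough M.row p) :
    ∃ N : Matrix κ μ S, M = (diagonal v).submatrix p id * N := by
  -- `M'` is the matrix of common rows, taken to be zero on the blocks that `p` misses.
  let M' : Matrix κ μ S := of (Function.extend p M.row 0)
  have hM' (i : ι) : M'.row (p i) = M.row i := hM.extend_apply 0 i
  refine ⟨diagonal v⁻¹ * M', ?_⟩
  ext i x
  calc M i x
      = v (p i) * ((v (p i))⁻¹ * M' (p i) x) := by
        rw [mul_inv_cancel_left₀ (hv i)]; exact congrFun (hM' i).symm x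
    _ = (diagonal v * (diagonal v⁻¹ * M')) (p i) x := by
        rw [diagonal_mul, diagonal_mul, Pi.inv_apply]

lemma factorsThrough_row_mul [Fintype ι] [NonUnitalNonAssocSemiring S] {p : ι → κ}
    {A : Matrix ι ι S} {Q : Matrix ι μ S}
    (htrans : ∀ i j, p i = p j →
      ∃ g : Equiv.Perm ι, g i = j ∧ A.submatrix g g = A ∧ Q.submatrix g id = Q) :
    Function.FactorsThrough (A * Q).row p := by
  intro i j hij
  obtain ⟨g, rfl, hA, hQ⟩ := htrans i j hij
  have hAQ : (A * Q).submatrix g id = A * Q := by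
    rw [← submatrix_mul_equiv A Q g g id, hA, hQ]
  exact (congrFun hAQ i).symm

end BlockMatrix

section VertexPerm

variable {V W κ : Type*}

lemma exists_perm_apply_eq_and_comp_eq (c : V → κ) {i j i' j' : V}
    (hij : i ≠ j) (hij' : i' ≠ j') (hi : c i = c i') (hj : c j = c j') :
    ∃ σ : Equiv.Perm V, σ i = i' ∧ σ j = j' ∧ c ∘ σ = c := by
  let τ := Equiv.swap i i'
  have hτ (x : V) : c (τ x) = c x := Equiv.apply_swap_eq_self hi x
  have hτj : τ j ≠ i' := fun h => hij (τ.injective ((Equiv.swap_apply_left i i').trans h.symm))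
  refine ⟨τ.trans (Equiv.swap (τ j) j'), ?_, Equiv.swap_apply_left _ _, funext fun x => ?_⟩
  · rw [Equiv.trans_apply, Equiv.swap_apply_left, Equiv.swap_apply_of_ne_of_ne hτj.symm hij']
  · exact (Equiv.apply_swap_eq_self ((hτ j).trans hj) (τ x)).trans (hτ x)

lemma exists_perm_sym2Map_eq_and_comp_eq (c : V → κ) {e e' : Sym2 V}
    (he : ¬ e.IsDiag) (he' : ¬ e'.IsDiag) (h : e.map c = e'.map c) :
    ∃ σ : Equiv.Perm V, e.map σ = e' ∧ c ∘ σ = c := by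
  induction e with | _ i j
  induction e' with | _ i' j'
  rw [Sym2.mk_isDiag_iff] at he he'
  rcases Sym2.eq_iff.1 h with ⟨hi, hj⟩ | ⟨hi, hj⟩
  · obtain ⟨σ, rfl, rfl, hσ⟩ := exists_perm_apply_eq_and_comp_eq c he he' hi hj
    exact ⟨σ, rfl, hσ⟩
  · obtain ⟨σ, rfl, rfl, hσ⟩ := exists_perm_apply_eq_and_comp_eq c he (Ne.symm he') hi hj
    exact ⟨σ, Sym2.eq_swap, hσ⟩

lemma exists_mem_sym2Map_and_mem_sym2Map {f : V → W} (hf : f.Injective) {e e' : Sym2 V} :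
    (∃ w, w ∈ e.map f ∧ w ∈ e'.map f) ↔ ∃ v, v ∈ e ∧ v ∈ e' := by
  simp only [Sym2.mem_map]
  constructor
  · rintro ⟨_, ⟨v, hv, rfl⟩, v', hv', hvv'⟩
    exact ⟨v, hv, hf hvv' ▸ hv'⟩
  · rintro ⟨v, hv, hv'⟩
    exact ⟨f v, ⟨v, hv, rfl⟩, v, hv', rfl⟩

end VertexPerm

/-- The permutation of the edges of `K_n` induced by a permutation of its vertices; it is the
source of the symmetries of `A(L(K_n))`. -/
def edgePerm (σ : Equiv.Perm (Fin n)) : Equiv.Perm (CompleteEdge n) where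
  toFun e := ⟨e.1.map σ, (Sym2.isDiag_map σ.injective).not.2 e.2⟩
  invFun e := ⟨e.1.map σ.symm, (Sym2.isDiag_map σ.symm.injective).not.2 e.2⟩
  left_inv e := Subtype.ext (by simp [Sym2.map_map])
  right_inv e := Subtype.ext (by simp [Sym2.map_map])

lemma ALK_submatrix_edgePerm (σ : Equiv.Perm (Fin n)) :
    (ALK n).submatrix (edgePerm σ) (edgePerm σ) = ALK n := by
  ext e f
  exact if_congr (and_congr (edgePerm σ).injective.ne_iff
    (exists_mem_sym2Map_and_mem_sym2Map σ.injective)) rfl rfl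

lemma blkOf_edgePerm {c : Fin n → Fin k} {σ : Equiv.Perm (Fin n)} (hσ : c ∘ σ = c)
    (e : CompleteEdge n) : blkOf c (edgePerm σ e) = blkOf c e := by
  change (e.1.map σ).map c = e.1.map c
  rw [Sym2.map_map, hσ]

lemma Qmat_submatrix_edgePerm {c : Fin n → Fin k} {σ : Equiv.Perm (Fin n)} (hσ : c ∘ σ = c) :
    (Qmat c).submatrix (edgePerm σ) id = Qmat c := by
  ext e b
  simp only [submatrix_apply, id, Qmat, blkOf_edgePerm hσ]

lemma Qmat_eq_submatrix_diagonal (c : Fin n → Fin k) :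
    Qmat c = (diagonal fun b => 1 / √(blkSize c b)).submatrix (blkOf c) id := by
  ext e b
  obtain rfl | hb := eq_or_ne (blkOf c e) b
  · simp [Qmat]
  · simp [Qmat, hb]

lemma blkSize_blkOf_pos (c : Fin n → Fin k) (e : CompleteEdge n) : 0 < blkSize c (blkOf c e) :=
  Finset.card_pos.2 ⟨e, Finset.mem_filter.2 ⟨Finset.mem_univ e, rfl⟩⟩

lemma diagonal_comp_blkOf_mul_Qmat (c : Fin n → Fin k) (w : Sym2 (Fin k) → ℝ) :
    diagonal (w ∘ blkOf c) * Qmat c = Qmat c * diagonal w := by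
  rw [Qmat_eq_submatrix_diagonal]
  exact diagonal_comp_mul_submatrix_diagonal _ _ _

lemma factorsThrough_row_ALK_mul_Qmat (c : Fin n → Fin k) :
    Function.FactorsThrough (ALK n * Qmat c).row (blkOf c) := by
  refine factorsThrough_row_mul fun e e' h => ?_
  obtain ⟨σ, hσe, hσ⟩ := exists_perm_sym2Map_eq_and_comp_eq c e.2 e'.2 h
  exact ⟨edgePerm σ, Subtype.ext hσe, ALK_submatrix_edgePerm σ, Qmat_submatrix_edgePerm hσ⟩

lemma exists_ALK_mul_Qmat_eq_Qmat_mul (c : Fin n → Fin k) :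
    ∃ N : Matrix (Sym2 (Fin k)) (Sym2 (Fin k)) ℝ, ALK n * Qmat c = Qmat c * N := by
  have hweight (e : CompleteEdge n) : 1 / √(blkSize c (blkOf c e) : ℝ) ≠ 0 :=
    one_div_ne_zero (Real.sqrt_ne_zero'.2 (Nat.cast_pos.2 (blkSize_blkOf_pos c e)))
  obtain ⟨N, hN⟩ := exists_eq_submatrix_diagonal_mul (v := fun b => 1 / √(blkSize c b : ℝ))
    hweight (factorsThrough_row_ALK_mul_Qmat c)
  exact ⟨N, by rwa [← Qmat_eq_submatrix_diagonal] at hN⟩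

theorem sbm_lineGraph_mean_decomposition_general (c : Fin n → Fin k) (w : Sym2 (Fin k) → ℝ) :
    diagonal (w ∘ blkOf c) * Qmat c = Qmat c * diagonal w ∧
    (∃ N : Matrix (Sym2 (Fin k)) (Sym2 (Fin k)) ℝ,
        (diagonal (w ∘ blkOf c) * ALK n * diagonal (w ∘ blkOf c)) * Qmat c = Qmat c * N) ∧
    (Qmat c)ᵀ * (diagonal (w ∘ blkOf c) * ALK n * diagonal (w ∘ blkOf c)) * Qmat c
      = diagonal w * Mmat c * diagonal w := by
  have hRQ := diagonal_comp_blkOf_mul_Qmat c w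
  obtain ⟨N, hN⟩ := exists_ALK_mul_Qmat_eq_Qmat_mul c
  exact ⟨hRQ, ⟨diagonal w * N * diagonal w, mul_mul_mul_eq_of_intertwine hRQ hN⟩,
    transpose_mul_mul_eq_of_intertwine (isSymm_diagonal _) (isSymm_diagonal _) hRQ⟩

/-- For an SBM with cluster map `c` (all cluster sizes ≥ 2) and symmetric
`B ∈ M_k([0,1])`, with `R` the diagonal matrix of edge probabilities, `Q` the block-indicator
matrix and `M = Qᵀ A(L(K_n)) Q`:  `R Q = Q · diag([B_{r,s}])`, the range of `Q` is an
invariant subspace of `R · A(L(K_n)) · R`, and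
`Qᵀ (R · A(L(K_n)) · R) Q = diag([B_{r,s}]) · M · diag([B_{r,s}])`. -/
theorem sbm_lineGraph_mean_decomposition {n k : ℕ}
    (c : Fin n → Fin k) (hsz : ∀ r, 2 ≤ clusterSize c r)
    (B : Matrix (Fin k) (Fin k) ℝ) (hBsym : Bᵀ = B)
    (hB : ∀ r s, B r s ∈ Set.Icc (0:ℝ) 1) :
    Rmat c B * Qmat c = Qmat c * Matrix.diagonal (symVal B) ∧
    (∃ N : Matrix (Sym2 (Fin k)) (Sym2 (Fin k)) ℝ,
        (Rmat c B * ALK n * Rmat c B) * Qmat c = Qmat c * N) ∧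
    (Qmat c)ᵀ * (Rmat c B * ALK n * Rmat c B) * Qmat c
      = Matrix.diagonal (symVal B) * Mmat c * Matrix.diagonal (symVal B) :=
  sbm_lineGraph_mean_decomposition_general c (symVal B)
end
end
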